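/- Let G be a chordal graph. Then the dominance complex D(G) is homotopy equivalent to the sphere S^{τ(G)−1}. -/

import Mathlib

open SimpleGraph

/-- An abstract simplicial complex on the underlying vertex set `V`. -/
structure Cplx (V : Type) where
  faces : Finset V → Prop
  down_closed : ∀ ⦃σ τ : Finset V⦄, σ ⊆ τ → faces τ → faces σ

/-- The dominance complex of a graph: the faces are the subsets of the vertex set
whose complement is a dominating set. -/
def domCpx {V : Type} [Fintype V] [DecidableEq V] (G : SimpleGraph V) : Cplx V where
  faces σ := ∀ v : V, ∃ w : V, w ∉ σ ∧ (w = v ∨ G.Adj w v)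
  down_closed := by
    intro σ τ hst h v
    obtain ⟨w, hw, h2⟩ := h v
    exact ⟨w, fun hc => hw (hst hc), h2⟩

open Classical in
/-- The geometric realization of a simplicial complex, as a subspace of `V → ℝ`. -/
def Cplx.space {V : Type} [Fintype V] (K : Cplx V) : Type :=
  {f : V → ℝ // (∑ v, f v = 1) ∧ (∀ v, 0 ≤ f v) ∧
    K.faces (Finset.univ.filter fun v => f v ≠ 0)}

instance {V : Type} [Fintype V] (K : Cplx V) : TopologicalSpace K.space :=
  instTopologicalSpaceSubtype

/-- The vertex cover number of a graph: the least size of a set of vertices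
meeting every edge. -/
noncomputable def vcNum {V : Type} [Fintype V] (G : SimpleGraph V) : ℕ :=
  sInf {k : ℕ | ∃ C : Finset V, (∀ ⦃u v : V⦄, G.Adj u v → u ∈ C ∨ v ∈ C) ∧ C.card = k}

/-- A graph is chordal if it contains no induced cycle of length at least 4. -/
def IsChordal {V : Type} (G : SimpleGraph V) : Prop :=
  ∀ n : ℕ, 4 ≤ n → IsEmpty (cycleGraph n ↪g G)

section Dirac

variable {V : Type} {G : SimpleGraph V}

/-- The spanning subgraph of `G` whose edges are the edges of `G` inside `T`. -/
def edgesWithin (G : SimpleGraph V) (T : Set V) : SimpleGraph V where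
  Adj x y := G.Adj x y ∧ x ∈ T ∧ y ∈ T
  symm := ⟨fun _ _ h => ⟨h.1.symm, h.2.2, h.2.1⟩⟩
  loopless := ⟨fun _ h => h.1.ne rfl⟩

lemma edgesWithin_mono {T T' : Set V} (h : T ⊆ T') : edgesWithin G T ≤ edgesWithin G T' :=
  fun _ _ hxy => ⟨hxy.1, h hxy.2.1, h hxy.2.2⟩

lemma mem_of_reachable_edgesWithin {T : Set V} {x y : V} (hx : x ∈ T)
    (h : (edgesWithin G T).Reachable x y) : y ∈ T := by
  obtain ⟨w⟩ := h
  induction w with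
  | nil => exact hx
  | cons hadj _ ih => exact ih hadj.2.2

/-- In a chordal graph, two neighbours of `a` that are joined by a walk avoiding the closed
neighbourhood of `a` are adjacent. -/
lemma IsChordal.adj_of_reachable (hch : IsChordal G) {a s t : V} {T : Set V}
    (hT : ∀ x ∈ T, x ≠ a ∧ ¬ G.Adj a x) (has : G.Adj a s) (hat : G.Adj a t) (hst : s ≠ t)
    (hr : (edgesWithin G (T ∪ {s, t})).Reachable s t) : G.Adj s t := by
  by_contra hadj
  set H := edgesWithin G (T ∪ {s, t})
  obtain ⟨w, hw⟩ := hr.exists_walk_length_eq_dist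
  have hmem : ∀ i, w.getVert i ∈ T ∪ {s, t} := fun i =>
    mem_of_reachable_edgesWithin (by simp) ⟨w.take i⟩
  have hdist : ∀ i ≤ w.length, H.dist s (w.getVert i) = i := by
    intro i hi
    have h1 : H.dist s (w.getVert i) ≤ i := by
      refine (SimpleGraph.dist_le (w.take i)).trans ?_
      simp
    have h2 : H.dist (w.getVert i) t ≤ w.length - i := by
      refine (SimpleGraph.dist_le (w.drop i)).trans ?_
      simp
    have h3 : H.dist s t ≤ H.dist s (w.getVert i) + H.dist (w.getVert i) t :=
      SimpleGraph.Reachable.dist_triangle_left ⟨w.take i⟩ t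
    omega
  have hnear : ∀ i ≤ w.length, ∀ j ≤ w.length, G.Adj (w.getVert i) (w.getVert j) → j ≤ i + 1 := by
    intro i hi j hj h
    have hHadj : H.Adj (w.getVert i) (w.getVert j) := ⟨h, hmem i, hmem j⟩
    have h3 : H.dist s (w.getVert j) ≤
        H.dist s (w.getVert i) + H.dist (w.getVert i) (w.getVert j) :=
      SimpleGraph.Reachable.dist_triangle_left ⟨w.take i⟩ _
    rw [hdist i hi, hdist j hj, SimpleGraph.dist_eq_one_iff_adj.2 hHadj] at h3
    exact h3
  have hinj : ∀ i ≤ w.length, ∀ j ≤ w.length, w.getVert i = w.getVert j → i = j := by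
    intro i hi j hj h
    rw [← hdist i hi, ← hdist j hj, h]
  have hstep : ∀ i < w.length, G.Adj (w.getVert i) (w.getVert (i + 1)) := fun i hi =>
    (w.adj_getVert_succ hi).1
  have hlen : 2 ≤ w.length := by
    by_contra hlt
    have hcases : w.length = 0 ∨ w.length = 1 := by omega
    rcases hcases with h0 | h1
    · exact hst (SimpleGraph.Walk.eq_of_length_eq_zero h0)
    · exact hadj (SimpleGraph.Walk.adj_of_length_eq_one h1).1
  have hne : ∀ i, w.getVert i ≠ a := by
    intro i h
    rcases hmem i with h' | h' | h'
    · exact (hT _ h').1 h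
    · exact has.ne (h.symm.trans h')
    · exact hat.ne (h.symm.trans h')
  have hends : ∀ i ≤ w.length, G.Adj a (w.getVert i) ↔ i = 0 ∨ i = w.length := by
    intro i hi
    constructor
    · intro h
      rcases hmem i with h' | h' | h'
      · exact absurd h (hT _ h').2
      · exact Or.inl (hinj i hi 0 (Nat.zero_le _) (by simpa using h'))
      · exact Or.inr (hinj i hi _ le_rfl (by simpa using h'))
    · rintro (rfl | rfl) <;> simpa
  refine (hch (w.length + 2) (by omega)).false
    ⟨⟨fun i => if i.1 ≤ w.length then w.getVert i.1 else a, ?_⟩, ?_⟩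
  · intro i j hij
    apply Fin.ext
    dsimp only at hij
    split_ifs at hij with h1 h2 h2
    · exact hinj _ h1 _ h2 hij
    · exact absurd hij (hne _)
    · exact absurd hij.symm (hne _)
    · omega
  · intro i j
    have hi := i.2
    have hj := j.2
    rw [SimpleGraph.cycleGraph_adj']
    simp only [Fin.sub_def]
    have hmod : ∀ p < w.length + 2, ∀ q < w.length + 2,
        ((w.length + 2 - q + p) % (w.length + 2) = 1 ↔ p = q + 1 ∨ (p = 0 ∧ q = w.length + 1)) := by
      intro p hp q hq
      rcases le_or_gt q p with h | h
      · have : w.length + 2 - q + p = (p - q) + (w.length + 2) := by omega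
        rw [this, Nat.add_mod_right, Nat.mod_eq_of_lt (by omega)]
        omega
      · rw [Nat.mod_eq_of_lt (by omega)]
        omega
    rw [hmod _ hi _ hj, hmod _ hj _ hi]
    change G.Adj (if i.1 ≤ w.length then w.getVert i.1 else a)
      (if j.1 ≤ w.length then w.getVert j.1 else a) ↔ _
    split_ifs with h1 h2 h2
    · constructor
      · intro h
        have e1 := hnear _ h1 _ h2 h
        have e2 := hnear _ h2 _ h1 h.symm
        have e3 : i.1 ≠ j.1 := fun h' => h.ne (by rw [h'])
        omega
      · rintro ((h | h) | (h | h))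
        · rw [h]; exact (hstep _ (by omega)).symm
        · omega
        · rw [h]; exact hstep _ (by omega)
        · omega
    · rw [G.adj_comm, hends _ h1]; omega
    · rw [hends _ h2]; omega
    · simp only [SimpleGraph.irrefl, false_iff]; omega

/-- Dirac: in every induced subgraph of a finite chordal graph, each vertex having a non-neighbour
has a simplicial non-neighbour. -/
lemma IsChordal.exists_simplicial_not_adj [DecidableEq V] (hch : IsChordal G) (n : ℕ) :
    ∀ R : Finset V, R.card = n → ∀ a ∈ R, ∀ b ∈ R, b ≠ a → ¬ G.Adj a b →
      ∃ v ∈ R, v ≠ a ∧ ¬ G.Adj a v ∧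
        ∀ x ∈ R, ∀ y ∈ R, G.Adj v x → G.Adj v y → x ≠ y → G.Adj x y := by
  classical
  induction n using Nat.strong_induction_on with
  | _ n ih =>
  intro R hR a ha b hb hba hab
  set T : Set V := {x | x ∈ R ∧ x ≠ a ∧ ¬ G.Adj a x}
  have hbT : b ∈ T := ⟨hb, hba, hab⟩
  set C : Finset V := R.filter fun x => (edgesWithin G T).Reachable b x
  set S : Finset V := R.filter fun x => x ∉ C ∧ ∃ c ∈ C, G.Adj x c
  have hCT : ∀ x ∈ C, x ∈ T := fun x hx =>
    mem_of_reachable_edgesWithin hbT (Finset.mem_filter.1 hx).2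
  have hbC : b ∈ C := Finset.mem_filter.2 ⟨hb, SimpleGraph.Reachable.refl _⟩
  have hSa : ∀ s ∈ S, G.Adj a s := by
    intro s hs
    obtain ⟨hsR, hsC, c, hc, hsc⟩ := Finset.mem_filter.1 hs
    by_contra hnot
    have hcT := hCT c hc
    have hsa : s ≠ a := by
      rintro rfl
      exact hcT.2.2 hsc
    exact hsC (Finset.mem_filter.2 ⟨hsR, (Finset.mem_filter.1 hc).2.trans
      (SimpleGraph.Adj.reachable ⟨hsc.symm, hcT, hsR, hsa, hnot⟩)⟩)
  have hSclique : ∀ s ∈ S, ∀ t ∈ S, s ≠ t → G.Adj s t := by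
    intro s hs t ht hst
    obtain ⟨_, _, c, hc, hsc⟩ := Finset.mem_filter.1 hs
    obtain ⟨_, _, d, hd, htd⟩ := Finset.mem_filter.1 ht
    refine hch.adj_of_reachable (fun x hx => hx.2) (hSa s hs) (hSa t ht) hst (T := T) ?_
    have hcd : (edgesWithin G T).Reachable c d :=
      (Finset.mem_filter.1 hc).2.symm.trans (Finset.mem_filter.1 hd).2
    have hs' : (edgesWithin G (T ∪ {s, t})).Adj s c := ⟨hsc, by simp, Or.inl (hCT c hc)⟩
    have ht' : (edgesWithin G (T ∪ {s, t})).Adj t d := ⟨htd, by simp, Or.inl (hCT d hd)⟩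
    exact hs'.reachable.trans
      ((hcd.mono (edgesWithin_mono Set.subset_union_left)).trans ht'.reachable.symm)
  have hsub : C ∪ S ⊆ R := Finset.union_subset (Finset.filter_subset _ _) (Finset.filter_subset _ _)
  have hcard : (C ∪ S).card < n := by
    rw [← hR]
    refine Finset.card_lt_card ((Finset.ssubset_iff_of_subset hsub).2 ⟨a, ha, ?_⟩)
    intro h
    rcases Finset.mem_union.1 h with h | h
    · exact (hCT a h).2.1 rfl
    · exact (hSa a h).ne rfl
  have hnbr : ∀ v ∈ C, ∀ x ∈ R, G.Adj v x → x ∈ C ∪ S := by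
    intro v hv x hx hvx
    by_cases hxC : x ∈ C
    · exact Finset.mem_union_left _ hxC
    · exact Finset.mem_union_right _ (Finset.mem_filter.2 ⟨hx, hxC, v, hv, hvx.symm⟩)
  suffices h : ∃ v ∈ C, ∀ x ∈ C ∪ S, ∀ y ∈ C ∪ S, G.Adj v x → G.Adj v y → x ≠ y → G.Adj x y by
    obtain ⟨v, hv, h⟩ := h
    exact ⟨v, (hCT v hv).1, (hCT v hv).2.1, (hCT v hv).2.2, fun x hx y hy hvx hvy =>
      h x (hnbr v hv x hx hvx) y (hnbr v hv y hy hvy) hvx hvy⟩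
  by_cases hcase : ∃ s ∈ S, ∃ y ∈ C ∪ S, y ≠ s ∧ ¬ G.Adj s y
  · obtain ⟨s, hs, y, hy, hys, hsy⟩ := hcase
    obtain ⟨v, hv, hvs, hsv, h⟩ :=
      ih _ hcard (C ∪ S) rfl s (Finset.mem_union_right _ hs) y hy hys hsy
    refine ⟨v, (Finset.mem_union.1 hv).resolve_right fun hvS => hsv ?_, h⟩
    exact hSclique s hs v hvS hvs.symm
  · push Not at hcase
    by_cases hcase' : ∃ c ∈ C, ∃ y ∈ C ∪ S, y ≠ c ∧ ¬ G.Adj c y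
    · obtain ⟨c, hc, y, hy, hyc, hcy⟩ := hcase'
      obtain ⟨v, hv, hvc, hcv, h⟩ :=
        ih _ hcard (C ∪ S) rfl c (Finset.mem_union_left _ hc) y hy hyc hcy
      refine ⟨v, (Finset.mem_union.1 hv).resolve_right fun hvS => hcv ?_, h⟩
      exact (hcase v hvS c (Finset.mem_union_left _ hc) hvc.symm).symm
    · push Not at hcase'
      refine ⟨b, hbC, fun x hx y hy _ _ hxy => ?_⟩
      rcases Finset.mem_union.1 hx with h | h
      · exact hcase' x h y hy hxy.symm
      · exact hcase x h y hy hxy.symm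

lemma IsChordal.exists_simplicial [DecidableEq V] (hch : IsChordal G) {R : Finset V}
    (hR : R.Nonempty) :
    ∃ v ∈ R, ∀ x ∈ R, ∀ y ∈ R, G.Adj v x → G.Adj v y → x ≠ y → G.Adj x y := by
  by_cases h : ∃ a ∈ R, ∃ b ∈ R, b ≠ a ∧ ¬ G.Adj a b
  · obtain ⟨a, ha, b, hb, hba, hab⟩ := h
    obtain ⟨v, hv, -, -, hsimp⟩ := hch.exists_simplicial_not_adj _ R rfl a ha b hb hba hab
    exact ⟨v, hv, hsimp⟩
  · push Not at h
    obtain ⟨v, hv⟩ := hR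
    exact ⟨v, hv, fun x hx y hy _ _ hxy => h x hx y hy hxy.symm⟩

end Dirac

section Collapse

section excess

variable {V ι : Type} [Fintype ι]

/-- The total amount by which `f` is positive on all of `τ i`, summed over `i`. -/
noncomputable def excess (τ : ι → Finset V) (hτ : ∀ i, (τ i).Nonempty)
    (f : V → ℝ) : ℝ := ∑ i, (τ i).inf' (hτ i) f

variable {τ : ι → Finset V} {hτ : ∀ i, (τ i).Nonempty} {f : V → ℝ}

lemma continuous_excess : Continuous (excess τ hτ) :=
  continuous_finsetSum _ fun i _ =>
    Continuous.finset_inf'_apply (hτ i) fun x _ => continuous_apply x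

lemma inf'_le_excess (hf : ∀ x, 0 ≤ f x) (i : ι) : (τ i).inf' (hτ i) f ≤ excess τ hτ f :=
  Finset.single_le_sum (f := fun i => (τ i).inf' (hτ i) f)
    (fun _ _ => Finset.le_inf' _ _ fun x _ => hf x) (Finset.mem_univ i)

lemma excess_nonneg (hf : ∀ x, 0 ≤ f x) : 0 ≤ excess τ hτ f :=
  Finset.sum_nonneg fun _ _ => Finset.le_inf' _ _ fun x _ => hf x

end excess

variable {V : Type} [Fintype V]

open Classical in
/-- The vertices with nonzero barycentric coordinate. -/
noncomputable def coordSupport (f : V → ℝ) : Finset V := Finset.univ.filter fun v => f v ≠ 0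

lemma mem_coordSupport {f : V → ℝ} {v : V} : v ∈ coordSupport f ↔ f v ≠ 0 := by
  simp [coordSupport]

variable {ι : Type} [Fintype ι] {τ : ι → Finset V} {hτ : ∀ i, (τ i).Nonempty} {v : V} {f : V → ℝ}

lemma excess_eq_zero (hf : ∀ x, 0 ≤ f x) (h : ∀ i, ¬ τ i ⊆ coordSupport f) :
    excess τ hτ f = 0 := by
  refine Finset.sum_eq_zero fun i _ => le_antisymm ?_ (Finset.le_inf' _ _ fun x _ => hf x)
  obtain ⟨x, hx, hx'⟩ := Finset.not_subset.1 (h i)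
  rw [mem_coordSupport, not_not] at hx'
  exact hx' ▸ Finset.inf'_le f hx

lemma exists_subset_of_excess_ne_zero (hf : ∀ x, 0 ≤ f x) (h : excess τ hτ f ≠ 0) :
    ∃ i, τ i ⊆ coordSupport f := by
  by_contra! hne
  exact h (excess_eq_zero hf hne)

/-- Lower the coordinates other than `v` by the excess, and put the mass gained on `v`. -/
noncomputable def pushTo [DecidableEq V] (τ : ι → Finset V)
    (hτ : ∀ i, (τ i).Nonempty) (v : V) (f : V → ℝ) (x : V) : ℝ :=
  if x = v then 1 - ∑ y ∈ Finset.univ.erase v, max (f y - excess τ hτ f) 0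
  else max (f x - excess τ hτ f) 0

section pushTo

variable [DecidableEq V]

lemma continuous_pushTo : Continuous (pushTo τ hτ v) := by
  have := continuous_excess (τ := τ) (hτ := hτ)
  refine continuous_pi fun x => ?_
  unfold pushTo
  split_ifs <;> fun_prop

lemma sum_pushTo : ∑ x, pushTo τ hτ v f x = 1 := by
  rw [← Finset.add_sum_erase _ _ (Finset.mem_univ v)]
  have : ∑ x ∈ Finset.univ.erase v, pushTo τ hτ v f x =
      ∑ x ∈ Finset.univ.erase v, max (f x - excess τ hτ f) 0 :=
    Finset.sum_congr rfl fun x hx => by rw [pushTo, if_neg (Finset.ne_of_mem_erase hx)]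
  rw [this, pushTo, if_pos rfl]
  ring

lemma pushTo_nonneg (hf : ∀ x, 0 ≤ f x) (hsum : ∑ x, f x = 1) (x : V) :
    0 ≤ pushTo τ hτ v f x := by
  unfold pushTo
  split_ifs
  · have h1 : ∑ y ∈ Finset.univ.erase v, max (f y - excess τ hτ f) 0 ≤
        ∑ y ∈ Finset.univ.erase v, f y :=
      Finset.sum_le_sum fun y _ => max_le (by linarith [excess_nonneg (τ := τ) (hτ := hτ) hf]) (hf y)
    have h2 := Finset.add_sum_erase Finset.univ f (Finset.mem_univ v)
    linarith [hf v]
  · exact le_max_right _ _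

lemma pushTo_of_excess_eq_zero (hf : ∀ x, 0 ≤ f x) (hsum : ∑ x, f x = 1)
    (h : excess τ hτ f = 0) : pushTo τ hτ v f = f := by
  funext x
  simp only [pushTo, h, sub_zero, max_eq_left (hf _)]
  split_ifs with hx
  · have h2 := Finset.add_sum_erase Finset.univ f (Finset.mem_univ v)
    rw [hx]
    linarith
  · rfl

lemma coordSupport_pushTo_subset (hf : ∀ x, 0 ≤ f x) :
    coordSupport (pushTo τ hτ v f) ⊆ insert v (coordSupport f) := by
  intro x hx
  rw [mem_coordSupport, pushTo] at hx
  rw [Finset.mem_insert, mem_coordSupport]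
  by_contra! h
  rw [if_neg h.1, h.2, max_eq_right (by linarith [excess_nonneg (τ := τ) (hτ := hτ) hf])] at hx
  exact hx rfl

lemma not_subset_coordSupport_pushTo (hf : ∀ x, 0 ≤ f x) {i : ι} (hv : v ∉ τ i) :
    ¬ τ i ⊆ coordSupport (pushTo τ hτ v f) := by
  intro h
  obtain ⟨x, hx, hmin⟩ := Finset.exists_mem_eq_inf' (hτ i) f
  have h1 := inf'_le_excess (hτ := hτ) hf i
  rw [hmin] at h1
  have h2 := mem_coordSupport.1 (h hx)
  rw [pushTo, if_neg (by rintro rfl; exact hv hx), max_eq_right (by linarith)] at h2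
  exact h2 rfl

end pushTo

/-- If the faces of `K` that are not faces of `L` are those containing one of the sets `τ i`, and
they are matched by adding and removing the vertex `v`, then `L` is a deformation retract of `K`. -/
lemma nonempty_homotopyEquiv_of_matching [DecidableEq V] (K L : Cplx V)
    (v : V) (τ : ι → Finset V) (hτ : ∀ i, (τ i).Nonempty) (hv : ∀ i, v ∉ τ i)
    (hL : ∀ σ, L.faces σ ↔ K.faces σ ∧ ∀ i, ¬ τ i ⊆ σ)
    (hK : ∀ σ i, K.faces σ → τ i ⊆ σ → K.faces (insert v σ)) :
    Nonempty (ContinuousMap.HomotopyEquiv K.space L.space) := by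
  have hcarrier : ∀ f : K.space, pushTo τ hτ v f.1 = f.1 ∨
      K.faces (insert v (coordSupport f.1)) := by
    rintro ⟨f, hsum, hf, hface⟩
    by_cases h : excess τ hτ f = 0
    · exact Or.inl (pushTo_of_excess_eq_zero hf hsum h)
    · obtain ⟨i, hi⟩ := exists_subset_of_excess_ne_zero hf h
      exact Or.inr (hK _ i hface hi)
  have hretr : ∀ f : K.space, L.faces (coordSupport (pushTo τ hτ v f.1)) := by
    intro f
    refine (hL _).2 ⟨?_, fun i => not_subset_coordSupport_pushTo f.2.2.1 (hv i)⟩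
    rcases hcarrier f with h | h
    · rw [h]; exact f.2.2.2
    · exact K.down_closed (coordSupport_pushTo_subset f.2.2.1) h
  let r : C(K.space, L.space) :=
    ⟨fun f => ⟨pushTo τ hτ v f.1, sum_pushTo, pushTo_nonneg f.2.2.1 f.2.1, hretr f⟩,
      Continuous.subtype_mk (continuous_pushTo.comp continuous_subtype_val) _⟩
  let incl : C(L.space, K.space) :=
    ⟨fun f => ⟨f.1, f.2.1, f.2.2.1, ((hL _).1 f.2.2.2).1⟩,
      Continuous.subtype_mk continuous_subtype_val _⟩
  have hline : ∀ (s : unitInterval) (f : K.space),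
      (∑ x, ((1 - (s : ℝ)) * pushTo τ hτ v f.1 x + s * f.1 x) = 1) ∧
      (∀ x, 0 ≤ (1 - (s : ℝ)) * pushTo τ hτ v f.1 x + s * f.1 x) ∧
      K.faces (coordSupport fun x => (1 - (s : ℝ)) * pushTo τ hτ v f.1 x + s * f.1 x) := by
    intro s f
    refine ⟨?_, fun x => ?_, ?_⟩
    · rw [Finset.sum_add_distrib, ← Finset.mul_sum, ← Finset.mul_sum, sum_pushTo, f.2.1]
      ring
    · exact add_nonneg (mul_nonneg (by linarith [s.2.2]) (pushTo_nonneg f.2.2.1 f.2.1 x))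
        (mul_nonneg s.2.1 (f.2.2.1 x))
    · rcases hcarrier f with h | h
      · rw [h]
        convert f.2.2.2 using 2
        refine Finset.ext fun x => ?_
        rw [mem_coordSupport, Finset.mem_filter]
        ring_nf
        simp
      · refine K.down_closed (fun x hx => ?_) h
        by_contra hnot
        have h1 : pushTo τ hτ v f.1 x = 0 := by
          by_contra h1
          exact hnot (coordSupport_pushTo_subset f.2.2.1 (mem_coordSupport.2 h1))
        have h2 : f.1 x = 0 := by
          by_contra h2
          exact hnot (Finset.mem_insert_of_mem (mem_coordSupport.2 h2))
        rw [mem_coordSupport, h1, h2] at hx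
        simp at hx
  refine ⟨⟨r, incl, ⟨⟨⟨fun p => ⟨_, hline p.1 p.2⟩, ?_⟩, ?_, ?_⟩⟩, ?_⟩⟩
  · refine Continuous.subtype_mk ?_ _
    have h1 : Continuous fun p : unitInterval × K.space => pushTo τ hτ v p.2.1 :=
      continuous_pushTo.comp (continuous_subtype_val.comp continuous_snd)
    have h2 : Continuous fun p : unitInterval × K.space => p.2.1 :=
      continuous_subtype_val.comp continuous_snd
    have h3 : Continuous fun p : unitInterval × K.space => (p.1 : ℝ) :=
      continuous_subtype_val.comp continuous_fst
    exact continuous_pi fun x => ((continuous_const.sub h3).mul ((continuous_apply x).comp h1)).add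
      (h3.mul ((continuous_apply x).comp h2))
  · intro f
    apply Subtype.ext
    funext x
    change (1 - ((0 : unitInterval) : ℝ)) * pushTo τ hτ v f.1 x +
      ((0 : unitInterval) : ℝ) * f.1 x = pushTo τ hτ v f.1 x
    simp
  · intro f
    apply Subtype.ext
    funext x
    simp
  · have : r.comp incl = ContinuousMap.id _ := by
      ext f : 1
      exact Subtype.ext (pushTo_of_excess_eq_zero f.2.2.1 f.2.1
        (excess_eq_zero f.2.2.1 ((hL _).1 f.2.2.2).2))
    rw [this]

end Collapse

section Sphere

variable {V : Type} [Fintype V] [DecidableEq V]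

/-- The minimum of `g` over the fibre of `ρ` through `x`. -/
noncomputable def fibreMin (ρ : V → V) (g : V → ℝ) (x : V) : ℝ :=
  (Finset.univ.filter fun y => ρ y = ρ x).inf' ⟨x, by simp⟩ g

lemma fibreMin_le (ρ : V → V) (g : V → ℝ) (x : V) : fibreMin ρ g x ≤ g x :=
  Finset.inf'_le _ (by simp)

lemma exists_eq_fibreMin (ρ : V → V) (g : V → ℝ) (x : V) :
    ∃ y, ρ y = ρ x ∧ fibreMin ρ g x = g y := by
  obtain ⟨y, hy, h⟩ := Finset.exists_mem_eq_inf'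
    (s := Finset.univ.filter fun y => ρ y = ρ x) ⟨x, by simp⟩ g
  exact ⟨y, by simpa using hy, h⟩

lemma fibreMin_congr (ρ : V → V) (g : V → ℝ) {x y : V} (h : ρ x = ρ y) :
    fibreMin ρ g x = fibreMin ρ g y := by
  simp only [fibreMin, h]

lemma fibreMin_eq {ρ : V → V} {g : V → ℝ} {x : V} {c : ℝ} (hle : ∀ y, ρ y = ρ x → c ≤ g y)
    (hex : ∃ y, ρ y = ρ x ∧ g y = c) : fibreMin ρ g x = c := by
  obtain ⟨y, hy, rfl⟩ := hex
  refine le_antisymm (Finset.inf'_le _ (by simpa using hy)) (Finset.le_inf' _ _ fun z hz => ?_)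
  exact hle z (by simpa using hz)

lemma continuous_fibreMin (ρ : V → V) (x : V) : Continuous fun g => fibreMin ρ g x :=
  Continuous.finset_inf'_apply _ fun y _ => continuous_apply y

/-- The join of the boundaries of the simplices spanned by the fibres of an idempotent map `ρ` is
a sphere, with one dimension for each point that `ρ` moves. -/
lemma nonempty_homeomorph_sphere_of_fibres (K : Cplx V) (ρ : V → V) (hρ : ∀ x, ρ (ρ x) = ρ x)
    (hK : ∀ σ, K.faces σ ↔ ∀ x, ∃ y, ρ y = ρ x ∧ y ∉ σ) {m : ℕ}
    (e : {x // ρ x ≠ x} ≃ Fin m) :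
    Nonempty (K.space ≃ₜ Metric.sphere (0 : EuclideanSpace ℝ (Fin m)) 1) := by
  have hmin : ∀ f : K.space, ∀ x, ∃ y, ρ y = ρ x ∧ f.1 y = 0 := by
    intro f x
    obtain ⟨y, hy, hy'⟩ := (hK _).1 f.2.2.2 x
    exact ⟨y, hy, by simpa using hy'⟩
  let slope : (V → ℝ) → EuclideanSpace ℝ (Fin m) := fun f =>
    WithLp.toLp 2 fun i => f (e.symm i) - f (ρ (e.symm i))
  let ext0 : EuclideanSpace ℝ (Fin m) → V → ℝ := fun g x =>
    if h : ρ x ≠ x then g (e ⟨x, h⟩) else 0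
  let lift : EuclideanSpace ℝ (Fin m) → V → ℝ := fun g x => ext0 g x - fibreMin ρ (ext0 g) x
  have hext_slope : ∀ (c : ℝ) (f : V → ℝ) x, ext0 (c • slope f) x = c * (f x - f (ρ x)) := by
    intro c f x
    by_cases h : ρ x ≠ x
    · simp [ext0, slope, h]
    · simp only [ne_eq, not_not] at h
      simp [ext0, h]
  have hext_fix : ∀ g x, ext0 g (ρ x) = 0 := by
    intro g x
    simp [ext0, hρ]
  have hext_inj : ∀ g, (∀ x, ext0 g x = 0) → g = 0 := by
    intro g h
    ext i
    have := h (e.symm i)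
    simpa [ext0, (e.symm i).2] using this
  have hlift_nonneg : ∀ g x, 0 ≤ lift g x := fun g x => sub_nonneg.2 (fibreMin_le _ _ _)
  have hlift_sub : ∀ g x, lift g x - lift g (ρ x) = ext0 g x := by
    intro g x
    simp only [lift, hext_fix, fibreMin_congr ρ (ext0 g) (hρ x)]
    ring
  have hlift_slope : ∀ (f : K.space) (c : ℝ), 0 < c → ∀ x, lift (c • slope f.1) x = c * f.1 x := by
    intro f c hc x
    have : fibreMin ρ (ext0 (c • slope f.1)) x = - (c * f.1 (ρ x)) := by
      refine fibreMin_eq (fun y hy => ?_) ?_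
      · rw [hext_slope, hy]
        nlinarith [mul_nonneg hc.le (f.2.2.1 y)]
      · obtain ⟨y, hy, hy0⟩ := hmin f x
        exact ⟨y, hy, by rw [hext_slope, hy, hy0]; ring⟩
    simp only [lift, this, hext_slope]
    ring
  have hslope_ne : ∀ f : K.space, slope f.1 ≠ 0 := by
    intro f h
    have h0 : ∀ x, f.1 x = 0 := by
      intro x
      have hconst : ∀ y, f.1 y = f.1 (ρ y) := by
        intro y
        have := hext_slope 1 f.1 y
        rw [h, smul_zero, one_mul] at this
        simp [ext0] at this
        linarith
      obtain ⟨y, hy, hy0⟩ := hmin f x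
      rw [hconst x, ← hy, ← hconst y, hy0]
    have := f.2.1
    simp [h0] at this
  have hlift_pos : ∀ g, g ≠ 0 → 0 < ∑ x, lift g x := by
    intro g hg
    refine lt_of_le_of_ne (Finset.sum_nonneg fun x _ => hlift_nonneg g x) fun h => hg ?_
    have h0 := (Finset.sum_eq_zero_iff_of_nonneg fun x _ => hlift_nonneg g x).1 h.symm
    refine hext_inj g fun x => ?_
    rw [← hlift_sub, h0 x (Finset.mem_univ _), h0 _ (Finset.mem_univ _), sub_zero]
  have hslope_lift : ∀ (c : ℝ) g, slope (fun x => c * lift g x) = c • g := by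
    intro c g
    ext i
    have := hlift_sub g (e.symm i)
    simp only [slope, ← mul_sub, this]
    simp [ext0, (e.symm i).2]
  have hslope_cont : Continuous slope := by
    refine (PiLp.continuous_toLp 2 _).comp (continuous_pi fun i => ?_)
    fun_prop
  have hext_cont : Continuous ext0 := by
    refine continuous_pi fun x => ?_
    simp only [ext0]
    split_ifs <;> fun_prop
  have hlift_cont : Continuous lift :=
    continuous_pi fun x => ((continuous_apply x).comp hext_cont).sub
      ((continuous_fibreMin ρ x).comp hext_cont)
  have hsphere_ne : ∀ g : Metric.sphere (0 : EuclideanSpace ℝ (Fin m)) 1, g.1 ≠ 0 :=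
    fun g => ne_zero_of_mem_unit_sphere g
  have hface : ∀ g : Metric.sphere (0 : EuclideanSpace ℝ (Fin m)) 1,
      K.faces (coordSupport fun x => (∑ y, lift g.1 y)⁻¹ * lift g.1 x) := by
    intro g
    refine (hK _).2 fun x => ?_
    obtain ⟨y, hy, h⟩ := exists_eq_fibreMin ρ (ext0 g.1) x
    refine ⟨y, hy, ?_⟩
    rw [mem_coordSupport, not_not]
    simp only [lift, fibreMin_congr ρ (ext0 g.1) hy, h, sub_self, mul_zero]
  refine ⟨⟨⟨fun f => ⟨‖slope f.1‖⁻¹ • slope f.1, ?_⟩,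
    fun g => ⟨fun x => (∑ y, lift g.1 y)⁻¹ * lift g.1 x, ?_, ?_, hface g⟩, ?_, ?_⟩, ?_, ?_⟩⟩
  · rw [mem_sphere_zero_iff_norm, norm_smul, norm_inv, norm_norm]
    exact inv_mul_cancel₀ (norm_ne_zero_iff.2 (hslope_ne f))
  · rw [← Finset.mul_sum]
    exact inv_mul_cancel₀ (hlift_pos _ (hsphere_ne g)).ne'
  · exact fun x => mul_nonneg (inv_nonneg.2 (hlift_pos _ (hsphere_ne g)).le) (hlift_nonneg _ _)
  · intro f
    have hpos : 0 < ‖slope f.1‖⁻¹ := inv_pos.2 (norm_pos_iff.2 (hslope_ne f))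
    apply Subtype.ext
    funext x
    simp only [hlift_slope f _ hpos, ← Finset.mul_sum, f.2.1, mul_one]
    rw [← mul_assoc, inv_mul_cancel₀ hpos.ne', one_mul]
  · intro g
    have hpos := inv_pos.2 (hlift_pos _ (hsphere_ne g))
    apply Subtype.ext
    have hnorm : ‖g.1‖ = 1 := norm_eq_of_mem_sphere g
    simp only [hslope_lift, norm_smul, hnorm, mul_one, Real.norm_of_nonneg hpos.le]
    rw [smul_smul, inv_mul_cancel₀ hpos.ne', one_smul]
  · refine Continuous.subtype_mk ?_ _
    have h1 : Continuous fun f : K.space => slope f.1 := hslope_cont.comp continuous_subtype_val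
    exact (h1.norm.inv₀ fun f => norm_ne_zero_iff.2 (hslope_ne f)).smul h1
  · refine Continuous.subtype_mk (continuous_pi fun x => ?_) _
    have h1 : Continuous fun g : Metric.sphere (0 : EuclideanSpace ℝ (Fin m)) 1 => lift g.1 :=
      hlift_cont.comp continuous_subtype_val
    have h2 : ∀ y, Continuous fun g : Metric.sphere (0 : EuclideanSpace ℝ (Fin m)) 1 => lift g.1 y :=
      fun y => (continuous_apply y).comp h1
    exact ((continuous_finsetSum _ fun y _ => h2 y).inv₀
      fun g => (hlift_pos _ (hsphere_ne g)).ne').mul (h2 x)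

end Sphere

section Dominance

variable {V : Type}

lemma Cplx.ext_faces {K L : Cplx V} (h : ∀ σ, K.faces σ ↔ L.faces σ) : K = L := by
  cases K
  cases L
  congr
  funext σ
  exact propext (h σ)

open Classical in
/-- The closed neighbourhood of `u` within `R`. -/
noncomputable def closedNbr (G : SimpleGraph V) (R : Finset V) (u : V) : Finset V :=
  R.filter fun w => w = u ∨ G.Adj w u

lemma mem_closedNbr {G : SimpleGraph V} {R : Finset V} {u w : V} :
    w ∈ closedNbr G R u ↔ w ∈ R ∧ (w = u ∨ G.Adj w u) := by
  simp [closedNbr]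

/-- The join of the dominance complex of `G` induced on `R` with the complex whose minimal
nonfaces are the members of `𝓠`, when these are disjoint from `R`. -/
def relDomCpx (G : SimpleGraph V) (R : Finset V) (𝓠 : Set (Finset V)) : Cplx V where
  faces σ := (∀ P ∈ 𝓠, ¬ P ⊆ σ) ∧ ∀ u ∈ R, ¬ closedNbr G R u ⊆ σ
  down_closed _ _ hst h := ⟨fun P hP hPs => h.1 P hP (hPs.trans hst),
    fun u hu hus => h.2 u hu (hus.trans hst)⟩

variable [DecidableEq V]

/-- Splitting off the closed neighbourhood of a simplicial vertex. -/
lemma nonempty_homotopyEquiv_relDomCpx_of_simplicial [Fintype V] {G : SimpleGraph V}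
    {R : Finset V} {𝓠 : Set (Finset V)} (h𝓠 : ∀ P ∈ 𝓠, Disjoint P R) {v : V} (hv : v ∈ R)
    (hsimp : ∀ x ∈ R, ∀ y ∈ R, G.Adj v x → G.Adj v y → x ≠ y → G.Adj x y) :
    Nonempty (ContinuousMap.HomotopyEquiv (relDomCpx G R 𝓠).space
      (relDomCpx G (R \ closedNbr G R v) (insert (closedNbr G R v) 𝓠)).space) := by
  have hcontain : ∀ u ∈ closedNbr G R v, closedNbr G R v ⊆ closedNbr G R u := by
    intro u hu x hx
    rw [mem_closedNbr] at hu hx ⊢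
    refine ⟨hx.1, ?_⟩
    rcases hu.2 with rfl | huv
    · exact hx.2
    · rcases hx.2 with rfl | hxv
      · exact Or.inr huv.symm
      · by_cases hxu : x = u
        · exact Or.inl hxu
        · exact Or.inr (hsimp x hx.1 u hu.1 hxv.symm huv.symm hxu)
  have hvv : v ∈ closedNbr G R v := mem_closedNbr.2 ⟨hv, Or.inl rfl⟩
  have hsplit : ∀ u, closedNbr G (R \ closedNbr G R v) u = closedNbr G R u \ closedNbr G R v := by
    intro u
    ext x
    simp only [mem_closedNbr, Finset.mem_sdiff]
    tauto
  refine nonempty_homotopyEquiv_of_matching (ι := {u // u ∈ R \ closedNbr G R v}) _ _ v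
    (fun u => closedNbr G (R \ closedNbr G R v) u.1)
    (fun u => ⟨u.1, mem_closedNbr.2 ⟨u.2, Or.inl rfl⟩⟩) (fun u h => ?_) (fun σ => ?_) ?_
  · rw [hsplit] at h
    exact (Finset.mem_sdiff.1 h).2 hvv
  · constructor
    · rintro ⟨h1, h2⟩
      refine ⟨⟨fun P hP => h1 P (Set.mem_insert_of_mem _ hP), fun u hu hus => ?_⟩,
        fun u => h2 u.1 u.2⟩
      by_cases huv : u ∈ closedNbr G R v
      · exact h1 _ (Set.mem_insert _ _) ((hcontain u huv).trans hus)
      · refine h2 u (Finset.mem_sdiff.2 ⟨hu, huv⟩) (Finset.Subset.trans ?_ hus)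
        rw [hsplit]
        exact Finset.sdiff_subset
    · rintro ⟨⟨h1, h2⟩, h3⟩
      refine ⟨fun P hP => ?_, fun u hu => h3 ⟨u, hu⟩⟩
      rcases hP with rfl | hP
      · exact h2 v hv
      · exact h1 P hP
  · rintro σ ⟨u, hu⟩ ⟨h1, h2⟩ hsub
    obtain ⟨huR, huv⟩ := Finset.mem_sdiff.1 hu
    have hvu : ∀ w, w ∈ R → w ∉ closedNbr G R v → v ∉ closedNbr G R w := by
      intro w hwR hwv h
      rw [mem_closedNbr] at hwv h
      rcases h.2 with h | h
      · exact hwv ⟨hwR, Or.inl h.symm⟩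
      · exact hwv ⟨hwR, Or.inr h.symm⟩
    have hnot : ¬ closedNbr G R v ⊆ insert v σ := by
      intro h
      refine h2 u huR fun x hx => ?_
      by_cases hxv : x ∈ closedNbr G R v
      · refine (Finset.mem_insert.1 (h hxv)).resolve_left ?_
        rintro rfl
        exact hvu u huR huv hx
      · refine hsub ?_
        rw [hsplit]
        exact Finset.mem_sdiff.2 ⟨hx, hxv⟩
    refine ⟨fun P hP h => ?_, fun w hw h => ?_⟩
    · refine h1 P hP ((Finset.subset_insert_iff_of_notMem ?_).1 h)
      exact Finset.disjoint_right.1 (h𝓠 P hP) hv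
    · by_cases hwv : w ∈ closedNbr G R v
      · exact hnot ((hcontain w hwv).trans h)
      · exact h2 w hw ((Finset.subset_insert_iff_of_notMem (hvu w hw hwv)).1 h)

/-- A chordal graph decomposes into cliques, the fibres of `ρ`, represented by pairwise
nonadjacent vertices, so that the dominance complex retracts onto the join of the boundaries of the
simplices on these cliques. -/
lemma IsChordal.exists_clique_fibres [Fintype V] {G : SimpleGraph V} (hch : IsChordal G) (n : ℕ) :
    ∀ (R : Finset V) (𝓠 : Set (Finset V)), R.card = n → (∀ P ∈ 𝓠, Disjoint P R) →
      ∃ ρ : V → V, (∀ x ∈ R, ρ x ∈ R ∧ ρ (ρ x) = ρ x) ∧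
        (∀ x ∈ R, ∀ y ∈ R, ρ x = ρ y → x ≠ y → G.Adj x y) ∧
        (∀ x ∈ R, ∀ y ∈ R, ρ x = x → ρ y = y → ¬ G.Adj x y) ∧
        Nonempty (ContinuousMap.HomotopyEquiv (relDomCpx G R 𝓠).space
          (relDomCpx G ∅ (𝓠 ∪ {P | ∃ x ∈ R, P = R.filter fun y => ρ y = ρ x})).space) := by
  induction n using Nat.strong_induction_on with
  | _ n ih =>
  intro R 𝓠 hR h𝓠
  rcases R.eq_empty_or_nonempty with rfl | hne
  · refine ⟨id, by simp, by simp, by simp, ?_⟩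
    have hfam : 𝓠 ∪ {P | ∃ x ∈ (∅ : Finset V), P = (∅ : Finset V).filter fun y => id y = id x} =
        𝓠 := by
      simp only [Finset.notMem_empty, false_and, exists_false, Set.ofPred_false, Set.union_empty]
    rw [hfam]
    exact ⟨ContinuousMap.HomotopyEquiv.refl _⟩
  obtain ⟨v, hv, hsimp⟩ := hch.exists_simplicial hne
  obtain ⟨E⟩ := nonempty_homotopyEquiv_relDomCpx_of_simplicial h𝓠 hv hsimp
  have hvv : v ∈ closedNbr G R v := mem_closedNbr.2 ⟨hv, Or.inl rfl⟩
  set P := closedNbr G R v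
  have hPR : P ⊆ R := fun x hx => (mem_closedNbr.1 hx).1
  have hcard : (R \ P).card < n := by
    rw [← hR]
    exact Finset.card_lt_card ((Finset.ssubset_iff_of_subset Finset.sdiff_subset).2
      ⟨v, hv, fun h => (Finset.mem_sdiff.1 h).2 hvv⟩)
  have hdisj : ∀ Q ∈ insert P 𝓠, Disjoint Q (R \ P) := by
    rintro Q (rfl | hQ)
    · exact Finset.disjoint_sdiff
    · exact (h𝓠 Q hQ).mono_right Finset.sdiff_subset
  obtain ⟨ρ, hmap, hcl, hind, ⟨F⟩⟩ := ih _ hcard (R \ P) (insert P 𝓠) rfl hdisj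
  have hmap' : ∀ x ∈ R, x ∉ P → ρ x ∈ R ∧ ρ x ∉ P ∧ ρ (ρ x) = ρ x := by
    intro x hx hxP
    obtain ⟨h1, h2⟩ := hmap x (Finset.mem_sdiff.2 ⟨hx, hxP⟩)
    exact ⟨(Finset.mem_sdiff.1 h1).1, (Finset.mem_sdiff.1 h1).2, h2⟩
  have hvne : ∀ x ∈ R, x ∉ P → ρ x ≠ v := by
    rintro x hx hxP h
    exact (hmap' x hx hxP).2.1 (h ▸ hvv)
  have hvadj : ∀ x ∈ R, x ∉ P → ¬ G.Adj x v := fun x hx hxP h =>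
    hxP (mem_closedNbr.2 ⟨hx, Or.inr h⟩)
  set ρ' : V → V := fun x => if x ∈ P then v else ρ x
  have hin : ∀ x ∈ P, ρ' x = v := fun x hx => if_pos hx
  have hout : ∀ x ∉ P, ρ' x = ρ x := fun x hx => if_neg hx
  have hfam : insert P 𝓠 ∪ {Q | ∃ x ∈ R \ P, Q = (R \ P).filter fun y => ρ y = ρ x} =
      𝓠 ∪ {Q | ∃ x ∈ R, Q = R.filter fun y => ρ' y = ρ' x} := by
    have hfP : ∀ x ∈ P, (R.filter fun y => ρ' y = ρ' x) = P := by
      intro x hx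
      ext y
      rw [Finset.mem_filter, hin x hx]
      refine ⟨fun ⟨hy, h⟩ => ?_, fun hy => ⟨hPR hy, hin y hy⟩⟩
      by_contra hyP
      rw [hout y hyP] at h
      exact hvne y hy hyP h
    have hfQ : ∀ x ∈ R, x ∉ P → (R.filter fun y => ρ' y = ρ' x) =
        (R \ P).filter fun y => ρ y = ρ x := by
      intro x hx hxP
      ext y
      rw [Finset.mem_filter, Finset.mem_filter, Finset.mem_sdiff, hout x hxP]
      by_cases hy : y ∈ P
      · rw [hin y hy]
        exact ⟨fun h => absurd h.2.symm (hvne x hx hxP), fun h => absurd hy h.1.2⟩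
      · rw [hout y hy]
        tauto
    ext Q
    constructor
    · rintro ((rfl | hQ) | ⟨x, hx, rfl⟩)
      · exact Or.inr ⟨v, hv, (hfP v hvv).symm⟩
      · exact Or.inl hQ
      · obtain ⟨hx, hxP⟩ := Finset.mem_sdiff.1 hx
        exact Or.inr ⟨x, hx, (hfQ x hx hxP).symm⟩
    · rintro (hQ | ⟨x, hx, rfl⟩)
      · exact Or.inl (Or.inr hQ)
      · by_cases hxP : x ∈ P
        · exact Or.inl (Or.inl (hfP x hxP))
        · exact Or.inr ⟨x, Finset.mem_sdiff.2 ⟨hx, hxP⟩, hfQ x hx hxP⟩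
  refine ⟨ρ', fun x hx => ?_, fun x hx y hy h hxy => ?_, fun x hx y hy hxx hyy h => ?_,
    ⟨E.trans (hfam ▸ F)⟩⟩
  · by_cases hxP : x ∈ P
    · rw [hin x hxP]
      exact ⟨hv, hin v hvv⟩
    · obtain ⟨h1, h2, h3⟩ := hmap' x hx hxP
      rw [hout x hxP, hout _ h2]
      exact ⟨h1, h3⟩
  · by_cases hxP : x ∈ P <;> by_cases hyP : y ∈ P
    · have h1 := (mem_closedNbr.1 hxP).2
      have h2 := (mem_closedNbr.1 hyP).2
      rcases h1 with rfl | h1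
      · exact (h2.resolve_left hxy.symm).symm
      · rcases h2 with rfl | h2
        · exact h1
        · exact hsimp x hx y hy h1.symm h2.symm hxy
    · rw [hin x hxP, hout y hyP] at h
      exact absurd h.symm (hvne y hy hyP)
    · rw [hout x hxP, hin y hyP] at h
      exact absurd h (hvne x hx hxP)
    · rw [hout x hxP, hout y hyP] at h
      exact hcl x (Finset.mem_sdiff.2 ⟨hx, hxP⟩) y (Finset.mem_sdiff.2 ⟨hy, hyP⟩) h hxy
  · by_cases hxP : x ∈ P <;> by_cases hyP : y ∈ P
    · rw [hin x hxP] at hxx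
      rw [hin y hyP] at hyy
      exact h.ne (hxx.symm.trans hyy)
    · rw [hin x hxP] at hxx
      exact hvadj y hy hyP (hxx ▸ h.symm)
    · rw [hin y hyP] at hyy
      exact hvadj x hx hxP (hyy ▸ h)
    · rw [hout x hxP] at hxx
      rw [hout y hyP] at hyy
      exact hind x (Finset.mem_sdiff.2 ⟨hx, hxP⟩) y (Finset.mem_sdiff.2 ⟨hy, hyP⟩) hxx hyy h

/-- If the fibres of an idempotent map are cliques and its fixed points are pairwise nonadjacent,
then the points moved form a minimum vertex cover. -/
lemma vcNum_eq_card_moved [Fintype V] {G : SimpleGraph V} {ρ : V → V}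
    (hρ : ∀ x, ρ (ρ x) = ρ x) (hcl : ∀ x y, ρ x = ρ y → x ≠ y → G.Adj x y)
    (hind : ∀ x y, ρ x = x → ρ y = y → ¬ G.Adj x y) :
    vcNum G = Fintype.card {x // ρ x ≠ x} := by
  rw [Fintype.card_subtype]
  apply le_antisymm
  · refine Nat.sInf_le ⟨_, fun u w huw => ?_, rfl⟩
    by_contra! h
    simp only [Finset.mem_filter, Finset.mem_univ, true_and, not_not] at h
    exact hind u w h.1 h.2 huw
  · refine le_csInf ⟨_, Finset.univ, fun _ _ _ => Or.inl (Finset.mem_univ _), rfl⟩ ?_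
    rintro _ ⟨C, hC, rfl⟩
    have hinj : (Cᶜ).card ≤ (Finset.univ.filter fun x => ρ x = x).card := by
      refine Finset.card_le_card_of_injOn ρ (fun x _ => by simp [hρ]) fun x hx y hy h => ?_
      by_contra hxy
      rw [Finset.mem_coe, Finset.mem_compl] at hx hy
      rcases hC (hcl x y h hxy) with h' | h'
      · exact hx h'
      · exact hy h'
    have h1 := Finset.card_add_card_compl C
    have h2 := Finset.card_filter_add_card_filter_not (s := (Finset.univ : Finset V))
      (fun x => ρ x = x)
    rw [Finset.card_univ] at h2
    simp only [ne_eq]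
    omega

end Dominance

/-- Theorem 4.5 (Taylan): the dominance complex of a chordal graph `G` is homotopy
equivalent to the sphere `S^{τ(G)-1}`. -/
theorem dominance_chordal_homotopyEquiv_sphere {V : Type} [Fintype V] [DecidableEq V]
    (G : SimpleGraph V) (hch : IsChordal G) :
    Nonempty (ContinuousMap.HomotopyEquiv (domCpx G).space
      (Metric.sphere (0 : EuclideanSpace ℝ (Fin (vcNum G))) 1)) := by
  obtain ⟨ρ, hmap, hcl, hind, ⟨E⟩⟩ :=
    hch.exists_clique_fibres _ Finset.univ ∅ rfl (by simp)
  have hρ : ∀ x, ρ (ρ x) = ρ x := fun x => (hmap x (Finset.mem_univ x)).2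
  have hcard := vcNum_eq_card_moved hρ (fun x y => hcl x (Finset.mem_univ x) y (Finset.mem_univ y))
    (fun x y => hind x (Finset.mem_univ x) y (Finset.mem_univ y))
  have hdom : domCpx G = relDomCpx G Finset.univ ∅ := by
    refine Cplx.ext_faces fun σ => ?_
    simp only [domCpx, relDomCpx, Set.mem_empty_iff_false, false_imp_iff, implies_true,
      true_and, Finset.mem_univ, Finset.not_subset, mem_closedNbr, forall_const]
    exact forall_congr' fun v => exists_congr fun w => and_comm
  obtain ⟨F⟩ := nonempty_homeomorph_sphere_of_fibres (relDomCpx G ∅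
      (∅ ∪ {P | ∃ x ∈ Finset.univ, P = Finset.univ.filter fun y => ρ y = ρ x})) ρ hρ
    (fun σ => by simp [relDomCpx, Finset.not_subset])
    ((Fintype.equivFin _).trans (finCongr hcard.symm))
  rw [hdom]
  exact ⟨E.trans F.toHomotopyEquiv⟩
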